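/- Let ξ_1, …, ξ_d (d ≥ 2) be real random variables on a probability space (Ω, ℱ, P), let φ : [0,∞) → ℝ, and let β_1, …, β_d > 0 be such that E exp(λ ξ_i) ≤ exp(φ(λ β_i)) for every λ ≥ 0 and every i, with all these expectations finite. Define ν[φ](x) = sup_{λ ≥ 0} (λ x − φ(λ)), and suppose there exist δ_1, …, δ_d with 0 < δ_i ≤ β_i such that P(ξ_i > u) ≥ exp(− ν[φ](u / δ_i)) for every u ≥ 1 and every i. Then for every u ≥ 1, P(max_{i ≤ d} ξ_i > u) ≥ Σ_{i=1}^d exp(− ν[φ](u / δ_i)) − Σ_{i ≠ j, 1 ≤ i,j ≤ d} exp(− ν[φ](2u / (β_i + β_j))), where the double sum runs over ordered pairs (i, j) with i ≠ j. -/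

import Mathlib

open MeasureTheory Finset
open scoped ENNReal

/-- `exp(− ν[φ](x))` where `ν[φ](x) = sup_{λ ≥ 0} (λ x − φ(λ))` is the Young–Fenchel
transform of `φ`; equivalently the infimum of `exp(φ(λ) − λ x)` over `λ ≥ 0`. -/
noncomputable def expNegNu (φ : ℝ → ℝ) (x : ℝ) : ℝ≥0∞ :=
  ⨅ l : {l : ℝ // 0 ≤ l}, ENNReal.ofReal (Real.exp (φ l.1 - l.1 * x))

/-!
The two-term Bonferroni inequality bounds `P(max ξ i > u)` below by the sum of the single tails
minus the sum of the pairwise joint tails. A joint tail is at most either of its two single tails,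
which the Chernoff bound controls by `exp(−ν[φ](u / β i))` and `exp(−ν[φ](u / β j))`. Since
`2u / (β i + β j)` is the mediant of `u / β i` and `u / β j`, it does not exceed the larger of them,
and `exp(−ν[φ])` is antitone.
-/

theorem expNegNu_antitone (φ : ℝ → ℝ) : Antitone (expNegNu φ) := by
  intro x y hxy
  refine iInf_mono fun ⟨l, hl⟩ ↦ ?_
  dsimp only
  gcongr

theorem add_div_add_le_max_div_div {K : Type*} [Field K] [LinearOrder K] [IsStrictOrderedRing K]
    {b c : K} (u v : K) (hb : 0 < b) (hc : 0 < c) :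
    (u + v) / (b + c) ≤ max (u / b) (v / c) := by
  rw [div_le_iff₀ (add_pos hb hc), mul_add]
  exact add_le_add ((div_le_iff₀ hb).1 (le_max_left _ _)) ((div_le_iff₀ hc).1 (le_max_right _ _))

theorem sum_offDiag_add_sum_le_sum_offDiag_insert {ι M : Type*} [DecidableEq ι]
    [AddCommMonoid M] [PartialOrder M] [CanonicallyOrderedAdd M]
    {a : ι} {s : Finset ι} (ha : a ∉ s) (f : ι × ι → M) :
    ∑ p ∈ s.offDiag, f p + ∑ i ∈ s, f (a, i) ≤ ∑ p ∈ (insert a s).offDiag, f p := by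
  have hdisj : Disjoint s.offDiag ({a} ×ˢ s) := by
    rw [Finset.disjoint_left]
    rintro ⟨i, j⟩ hs has
    simp only [mem_offDiag, mem_product, mem_singleton] at hs has
    exact ha (has.1 ▸ hs.1)
  calc ∑ p ∈ s.offDiag, f p + ∑ i ∈ s, f (a, i)
      = ∑ p ∈ s.offDiag ∪ {a} ×ˢ s, f p := by
        rw [sum_union hdisj, sum_product, sum_singleton]
    _ ≤ ∑ p ∈ (insert a s).offDiag, f p := by
        rw [offDiag_insert ha]
        exact sum_le_sum_of_subset subset_union_left

section

variable {Ω : Type*} [MeasurableSpace Ω] {P : Measure Ω}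

theorem sum_measure_le_measure_biUnion_add_sum_offDiag {ι : Type*}
    {A : ι → Set Ω} (hA : ∀ i, NullMeasurableSet (A i) P) (s : Finset ι) :
    ∑ i ∈ s, P (A i) ≤ P (⋃ i ∈ s, A i) + ∑ p ∈ s.offDiag, P (A p.1 ∩ A p.2) := by
  classical
  induction s using Finset.induction_on with
  | empty => simp
  | insert a s ha ih =>
    have hunion : NullMeasurableSet (⋃ i ∈ s, A i) P :=
      s.nullMeasurableSet_biUnion fun i _ ↦ hA i
    have hinter : P (A a ∩ ⋃ i ∈ s, A i) ≤ ∑ i ∈ s, P (A a ∩ A i) := by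
      rw [Set.inter_iUnion₂]
      exact measure_biUnion_finset_le s _
    rw [sum_insert ha, set_biUnion_insert]
    calc P (A a) + ∑ i ∈ s, P (A i)
        ≤ P (A a) + (P (⋃ i ∈ s, A i) + ∑ p ∈ s.offDiag, P (A p.1 ∩ A p.2)) := by gcongr
      _ = P (A a ∪ ⋃ i ∈ s, A i)
            + (∑ p ∈ s.offDiag, P (A p.1 ∩ A p.2) + P (A a ∩ ⋃ i ∈ s, A i)) := by
          rw [← add_assoc, ← measure_union_add_inter₀ (A a) hunion]
          ring
      _ ≤ P (A a ∪ ⋃ i ∈ s, A i)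
            + (∑ p ∈ s.offDiag, P (A p.1 ∩ A p.2) + ∑ i ∈ s, P (A a ∩ A i)) := by gcongr
      _ ≤ P (A a ∪ ⋃ i ∈ s, A i) + ∑ p ∈ (insert a s).offDiag, P (A p.1 ∩ A p.2) := by
          gcongr
          exact sum_offDiag_add_sum_le_sum_offDiag_insert ha fun p ↦ P (A p.1 ∩ A p.2)

theorem measure_ge_le_lintegral_exp_div {X : Ω → ℝ} (hX : AEMeasurable X P)
    {l : ℝ} (hl : 0 ≤ l) (u : ℝ) :
    P {ω | u ≤ X ω} ≤
      (∫⁻ ω, ENNReal.ofReal (Real.exp (l * X ω)) ∂P) / ENNReal.ofReal (Real.exp (l * u)) := by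
  have hsubset : {ω | u ≤ X ω} ⊆
      {ω | ENNReal.ofReal (Real.exp (l * u)) ≤ ENNReal.ofReal (Real.exp (l * X ω))} := by
    intro ω (hω : u ≤ X ω)
    simp only [Set.mem_ofPred_eq]
    gcongr
  exact (measure_mono hsubset).trans <| meas_ge_le_lintegral_div (by fun_prop)
    (ENNReal.ofReal_pos.2 (Real.exp_pos _)).ne' ENNReal.ofReal_ne_top

/-- The exponential moment bound `E exp(l X) ≤ exp(φ(l b))` for all `l ≥ 0`, which for `0 < b`
expresses that the `B(φ)`-norm of `X` is at most `b`. The expectation is an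
`ℝ≥0∞`-valued integral, so the bound includes its finiteness. -/
def BNormLE (P : Measure Ω) (φ : ℝ → ℝ) (X : Ω → ℝ) (b : ℝ) : Prop :=
  ∀ l : ℝ, 0 ≤ l →
    ∫⁻ ω, ENNReal.ofReal (Real.exp (l * X ω)) ∂P ≤ ENNReal.ofReal (Real.exp (φ (l * b)))

variable {φ : ℝ → ℝ} {X Y : Ω → ℝ} {b c : ℝ}

theorem BNormLE.measure_ge_le (hXb : BNormLE P φ X b) (hX : AEMeasurable X P) (hb : 0 < b)
    (u : ℝ) : P {ω | u ≤ X ω} ≤ expNegNu φ (u / b) := by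
  refine le_iInf fun ⟨l, hl⟩ ↦ ?_
  have hlb : 0 ≤ l / b := div_nonneg hl hb.le
  calc P {ω | u ≤ X ω}
      ≤ (∫⁻ ω, ENNReal.ofReal (Real.exp (l / b * X ω)) ∂P)
          / ENNReal.ofReal (Real.exp (l / b * u)) := measure_ge_le_lintegral_exp_div hX hlb u
    _ ≤ ENNReal.ofReal (Real.exp (φ (l / b * b))) / ENNReal.ofReal (Real.exp (l / b * u)) := by
        gcongr
        exact hXb _ hlb
    _ = ENNReal.ofReal (Real.exp (φ l - l * (u / b))) := by
        rw [← ENNReal.ofReal_div_of_pos (Real.exp_pos _), ← Real.exp_sub,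
          div_mul_cancel₀ l hb.ne', div_mul_eq_mul_div, mul_div_assoc]

theorem BNormLE.measure_ge_inter_ge_le (hXb : BNormLE P φ X b) (hYc : BNormLE P φ Y c)
    (hX : AEMeasurable X P) (hY : AEMeasurable Y P) (hb : 0 < b) (hc : 0 < c) (u v : ℝ) :
    P ({ω | u ≤ X ω} ∩ {ω | v ≤ Y ω}) ≤ expNegNu φ ((u + v) / (b + c)) := by
  rcases le_max_iff.1 (add_div_add_le_max_div_div u v hb hc) with hle | hle
  · exact (measure_mono Set.inter_subset_left).trans <|
      (hXb.measure_ge_le hX hb u).trans (expNegNu_antitone φ hle)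
  · exact (measure_mono Set.inter_subset_right).trans <|
      (hYc.measure_ge_le hY hc v).trans (expNegNu_antitone φ hle)

theorem maximum_tail_lower_estimate_general {ι : Type*} [Fintype ι]
    {ξ : ι → Ω → ℝ} (hξ : ∀ i, AEMeasurable (ξ i) P) {β : ι → ℝ} (hβ : ∀ i, 0 < β i)
    (hξβ : ∀ i, BNormLE P φ (ξ i) (β i)) (u : ℝ) :
    (∑ i, P {ω | ξ i ω > u}) - ∑ p ∈ univ.offDiag, expNegNu φ (2 * u / (β p.1 + β p.2))
      ≤ P {ω | ∃ i, ξ i ω > u} := by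
  have hjoint (i j : ι) :
      P ({ω | ξ i ω > u} ∩ {ω | ξ j ω > u}) ≤ expNegNu φ (2 * u / (β i + β j)) := by
    rw [two_mul]
    have hsubset : {ω | ξ i ω > u} ∩ {ω | ξ j ω > u} ⊆ {ω | u ≤ ξ i ω} ∩ {ω | u ≤ ξ j ω} := by
      rintro ω ⟨hi : u < ξ i ω, hj : u < ξ j ω⟩
      exact ⟨hi.le, hj.le⟩
    exact (measure_mono hsubset).trans <|
      (hξβ i).measure_ge_inter_ge_le (hξβ j) (hξ i) (hξ j) (hβ i) (hβ j) u u
  have hunion : {ω | ∃ i, ξ i ω > u} = ⋃ i ∈ univ, {ω | ξ i ω > u} := by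
    simp [Set.ofPred_exists]
  have hmeas (i : ι) : NullMeasurableSet {ω | ξ i ω > u} P :=
    nullMeasurableSet_lt aemeasurable_const (hξ i)
  rw [tsub_le_iff_right, hunion]
  exact (sum_measure_le_measure_biUnion_add_sum_offDiag hmeas univ).trans <| by
    gcongr
    exact hjoint _ _

end

/-- **Proposition 4.1: lower maximum tail estimate.** If `‖ξ i‖B(φ) ≤ β i` and
`P(ξ i > u) ≥ exp(−ν[φ](u/δ i))` with `0 < δ i ≤ β i`, then for `u ≥ 1`,
`P(max_i ξ i > u) ≥ ∑ i exp(−ν[φ](u/δ i)) − ∑∑_{i ≠ j} exp(−ν[φ](2u/(β i + β j)))`,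
the double sum running over ordered pairs `(i,j)` with `i ≠ j`. -/
theorem maximum_tail_lower_estimate
    {Ω : Type*} [MeasurableSpace Ω] (P : Measure Ω) [IsProbabilityMeasure P]
    {d : ℕ} (hd : 2 ≤ d)
    (ξ : Fin d → Ω → ℝ) (hmeas : ∀ i, Measurable (ξ i))
    (φ : ℝ → ℝ) (βv : Fin d → ℝ) (hβv : ∀ i, 0 < βv i)
    (hmgf : ∀ i, ∀ l : ℝ, 0 ≤ l →
      ∫⁻ ω, ENNReal.ofReal (Real.exp (l * ξ i ω)) ∂P
        ≤ ENNReal.ofReal (Real.exp (φ (l * βv i))))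
    (δ : Fin d → ℝ) (hδpos : ∀ i, 0 < δ i) (hδle : ∀ i, δ i ≤ βv i)
    (hlow : ∀ i, ∀ u : ℝ, 1 ≤ u → expNegNu φ (u / δ i) ≤ P {ω | ξ i ω > u})
    (u : ℝ) (hu : 1 ≤ u) :
    (∑ i, expNegNu φ (u / δ i))
        - ∑ p ∈ Finset.univ.offDiag, expNegNu φ (2 * u / (βv p.1 + βv p.2))
      ≤ P {ω | ∃ i, ξ i ω > u} := by
  exact (tsub_le_tsub_right (sum_le_sum fun i _ ↦ hlow i u hu) _).trans <|
    maximum_tail_lower_estimate_general (fun i ↦ (hmeas i).aemeasurable) hβv hmgf u
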